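/- arXiv:math/0009239 — 2 statements merged into one kernel-verified Lean document; each statement's English description precedes it below -/
import Mathlib

section
/- Let L be a finite-dimensional graded maximal subalgebra of Vect_pol(E). Then Vect_{−1}(E) ⊆ L, i.e. L contains all constant vector fields. -/
open MvPolynomial

/-- The Lie algebra of polynomial vector fields on `E = 𝕜^n`, realized as the
derivations of the polynomial algebra `𝕜[x_1, …, x_n]`. -/
abbrev Vect (𝕜 : Type*) [Field 𝕜] (n : ℕ) : Type _ :=
  Derivation 𝕜 (MvPolynomial (Fin n) 𝕜) (MvPolynomial (Fin n) 𝕜)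

variable (𝕜 : Type*) [Field 𝕜] (n : ℕ)

/-- The Euler vector field `ℰ = Σ x^j ∂_j`. -/
noncomputable def euler : Vect 𝕜 n :=
  MvPolynomial.mkDerivation 𝕜 fun i => MvPolynomial.X i

/-- `Vect_p(E)`: the eigenspace of `ad(ℰ)` for the eigenvalue `p`, i.e. the vector fields
with homogeneous coefficients of degree `p+1`. -/
noncomputable def VectP (p : ℤ) : Submodule 𝕜 (Vect 𝕜 n) :=
  Module.End.eigenspace (LieAlgebra.ad 𝕜 (Vect 𝕜 n) (euler 𝕜 n)) ((p : 𝕜))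

/-- A Lie subalgebra `L` of `Vect_pol(E)` is graded if `L = ⊕_{p ≥ -1} (L ∩ Vect_p(E))`. -/
def IsGradedSubalg (L : LieSubalgebra 𝕜 (Vect 𝕜 n)) : Prop :=
  L.toSubmodule = ⨆ p ≥ (-1 : ℤ), (L.toSubmodule ⊓ VectP 𝕜 n p)

/-- A Lie subalgebra `L` of `Vect_pol(E)` is maximal if the only subalgebras containing it
are `L` itself and `Vect_pol(E)`. -/
def IsMaxSubalg (L : LieSubalgebra 𝕜 (Vect 𝕜 n)) : Prop :=
  ∀ L' : LieSubalgebra 𝕜 (Vect 𝕜 n), L ≤ L' → L' = L ∨ L' = ⊤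

/-!
Let `V ⊆ 𝕜ⁿ` be the space of those `c` whose constant field `∂_c` lies in `L`. If `D ∈ L` has
homogeneous coefficients of degree `d` and `v ∈ V`, then `(ad ∂_v)^d D = d! • ∂_{D(v)}`, so
`D(v) ∈ V`. Hence every element of the graded algebra `L` is tangent to the linear subspace `V`.

The fields tangent to `V` form a subalgebra, which is infinite-dimensional because it contains
`f • ℰ` for every polynomial `f`. Hence it differs from `L`, and by maximality it consists of all
vector fields. But only the constant fields `∂_c` with `c ∈ V` are tangent to `V`, so `V = 𝕜ⁿ`.
-/

section IdealStabilizer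

variable (R : Type*) {A : Type*} [CommRing R] [CommRing A] [Algebra R A]

/-- The Lie algebra of the derivations that preserve the ideal `I`. When `I` is the ideal of a
subvariety, these are the vector fields tangent to it. -/
def idealStabilizer (I : Ideal A) : LieSubalgebra R (Derivation R A A) where
  carrier := {D | ∀ f ∈ I, D f ∈ I}
  zero_mem' _ _ := I.zero_mem
  add_mem' h₁ h₂ f hf := I.add_mem (h₁ f hf) (h₂ f hf)
  smul_mem' r _ h f hf := I.smul_of_tower_mem r (h f hf)
  lie_mem' h₁ h₂ f hf := I.sub_mem (h₁ _ (h₂ f hf)) (h₂ _ (h₁ f hf))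

variable {R}

lemma mem_idealStabilizer {I : Ideal A} {D : Derivation R A A} :
    D ∈ idealStabilizer R I ↔ ∀ f ∈ I, D f ∈ I :=
  Iff.rfl

end IdealStabilizer

section ConstField

variable {R σ : Type*}

section CommSemiring

variable [CommSemiring R]

/-- The constant vector field `∂_c`, which acts on polynomials as the directional derivative
along `c`. -/
noncomputable def constField :
    (σ → R) →ₗ[R] Derivation R (MvPolynomial σ R) (MvPolynomial σ R) :=
  (mkDerivationEquiv R).toLinearMap ∘ₗ (Algebra.linearMap R (MvPolynomial σ R)).compLeft σ

/-- The value `D(v)` of the vector field `D` at the point `v`. -/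
noncomputable def valueAt (D : Derivation R (MvPolynomial σ R) (MvPolynomial σ R)) (v : σ → R) :
    σ → R :=
  fun i => eval v (D (X i))

@[simp]
lemma constField_X (c : σ → R) (i : σ) : constField c (X i) = C (c i) :=
  mkDerivation_X R _ i

@[simp]
lemma valueAt_constField (c v : σ → R) : valueAt (constField c) v = c := by
  ext i
  simp [valueAt]

lemma eval_apply_eq_eval_constField_valueAt
    (D : Derivation R (MvPolynomial σ R) (MvPolynomial σ R)) (v : σ → R) (f : MvPolynomial σ R) :
    eval v (D f) = eval v (constField (valueAt D v) f) := by
  induction f using MvPolynomial.induction_on with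
  | C a => simp only [derivation_C]
  | add p q hp hq => simp only [map_add, hp, hq]
  | mul_X p i hp => simp [Derivation.leibniz, hp, valueAt]

lemma derivation_aeval_eq_aeval_constField {A : Type*} [CommSemiring A] [Algebra R A]
    (D : Derivation R A A) {γ : σ → A} {c : σ → R} (hγ : ∀ i, D (γ i) = algebraMap R A (c i))
    (f : MvPolynomial σ R) : D (aeval γ f) = aeval γ (constField c f) := by
  induction f using MvPolynomial.induction_on with
  | C a => simp
  | add p q hp hq => simp only [map_add, hp, hq]
  | mul_X p i hp => simp [Derivation.leibniz, hp, hγ]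

lemma derivation_apply_eq_sum_pderiv [Fintype σ] {M : Type*} [AddCommMonoid M] [Module R M]
    [Module (MvPolynomial σ R) M] (D : Derivation R (MvPolynomial σ R) M)
    (f : MvPolynomial σ R) : D f = ∑ i, pderiv i f • D (X i) := by
  induction f using MvPolynomial.induction_on with
  | C a => simp
  | add p q hp hq => simp only [map_add, add_smul, Finset.sum_add_distrib, hp, hq]
  | mul_X p i hp =>
    classical
    simp [Derivation.leibniz, hp, pderiv_X, Pi.single_apply, add_smul, mul_smul,
      Finset.sum_add_distrib, Finset.smul_sum]

lemma isHomogeneous_constField_apply [Finite σ] {d : ℕ} {f : MvPolynomial σ R}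
    (hf : f.IsHomogeneous d) (c : σ → R) : (constField c f).IsHomogeneous (d - 1) := by
  have := Fintype.ofFinite σ
  rw [derivation_apply_eq_sum_pderiv]
  refine .sum _ _ _ fun i _ => ?_
  rw [constField_X, smul_eq_mul, mul_comm]
  exact hf.pderiv.C_mul (c i)

lemma eval_constField_self [Finite σ] {d : ℕ} {f : MvPolynomial σ R} (hf : f.IsHomogeneous d)
    (v : σ → R) : eval v (constField v f) = d * eval v f := by
  have := Fintype.ofFinite σ
  rw [derivation_apply_eq_sum_pderiv (constField v)]
  simpa [mul_comm] using congrArg (eval v) hf.sum_X_mul_pderiv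

lemma eq_C_coeff_zero_of_isHomogeneous_zero {f : MvPolynomial σ R} (hf : f.IsHomogeneous 0) :
    f = C (coeff 0 f) :=
  totalDegree_eq_zero_iff_eq_C.1 ((totalDegree_zero_iff_isHomogeneous σ).2 hf)

lemma iterate_constField_of_isHomogeneous [Finite σ] (v : σ → R) {d : ℕ} {f : MvPolynomial σ R}
    (hf : f.IsHomogeneous d) : (constField v)^[d] f = C (d.factorial * eval v f) := by
  induction d generalizing f with
  | zero =>
    rw [eq_C_coeff_zero_of_isHomogeneous_zero hf]
    simp
  | succ d ih =>
    rw [Function.iterate_succ_apply, ih (isHomogeneous_constField_apply hf v),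
      eval_constField_self hf, Nat.factorial_succ]
    push_cast
    ring_nf

end CommSemiring

section CommRing

variable [CommRing R]

lemma lie_constField_apply_X (v : σ → R)
    (D : Derivation R (MvPolynomial σ R) (MvPolynomial σ R)) (i : σ) :
    ⁅constField v, D⁆ (X i) = constField v (D (X i)) := by
  rw [Derivation.commutator_apply, constField_X, derivation_C, sub_zero]

lemma ad_constField_pow_apply_X (v : σ → R)
    (D : Derivation R (MvPolynomial σ R) (MvPolynomial σ R)) (d : ℕ) (i : σ) :
    (LieAlgebra.ad R _ (constField v) ^ d) D (X i) = (constField v)^[d] (D (X i)) := by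
  induction d with
  | zero => rfl
  | succ d ih =>
    rw [pow_succ', Module.End.mul_apply, LieAlgebra.ad_apply, lie_constField_apply_X, ih,
      Function.iterate_succ_apply']

lemma ad_constField_pow_of_isHomogeneous [Finite σ] (v : σ → R) {d : ℕ}
    {D : Derivation R (MvPolynomial σ R) (MvPolynomial σ R)}
    (hD : ∀ i, (D (X i)).IsHomogeneous d) :
    (LieAlgebra.ad R _ (constField v) ^ d) D = (d.factorial : R) • constField (valueAt D v) := by
  refine derivation_ext fun i => ?_
  rw [ad_constField_pow_apply_X, iterate_constField_of_isHomogeneous v (hD i)]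
  simp [valueAt, smul_eq_C_mul]

/-- The space of the vectors `c` whose constant field `∂_c` belongs to `L`; it represents the
component `L₋₁` of a graded subalgebra. -/
noncomputable def constPart
    (L : LieSubalgebra R (Derivation R (MvPolynomial σ R) (MvPolynomial σ R))) :
    Submodule R (σ → R) :=
  L.toSubmodule.comap constField

end CommRing

section Field

variable {K : Type*} [Field K]

lemma valueAt_mem_constPart [CharZero K] [Finite σ]
    {L : LieSubalgebra K (Derivation K (MvPolynomial σ K) (MvPolynomial σ K))}
    {D : Derivation K (MvPolynomial σ K) (MvPolynomial σ K)} (hDL : D ∈ L) {d : ℕ}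
    (hD : ∀ i, (D (X i)).IsHomogeneous d) {v : σ → K} (hv : v ∈ constPart L) :
    valueAt D v ∈ constPart L := by
  have had : (LieAlgebra.ad K _ (constField v) ^ d) D ∈ L.toSubmodule :=
    Module.End.pow_apply_mem_of_forall_mem d (fun _ hY => L.lie_mem hv hY) D hDL
  rw [ad_constField_pow_of_isHomogeneous v hD] at had
  exact (L.toSubmodule.smul_mem_iff (Nat.cast_ne_zero.2 d.factorial_ne_zero)).1 had

end Field

end ConstField

section TangentSubalg

variable {K σ : Type*} [Field K]

/-- The Lie algebra of the vector fields tangent to the linear subspace `V`. Tangency is encoded as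
preservation of the vanishing ideal of `V`, which makes closure under brackets immediate;
`mem_tangentSubalg_iff` is the pointwise description. -/
noncomputable def tangentSubalg (V : Submodule K (σ → K)) :
    LieSubalgebra K (Derivation K (MvPolynomial σ K) (MvPolynomial σ K)) :=
  idealStabilizer K (vanishingIdeal K (V : Set (σ → K)))

lemma constField_mem_tangentSubalg [Infinite K] {V : Submodule K (σ → K)} {c : σ → K}
    (hc : c ∈ V) : constField c ∈ tangentSubalg V := by
  refine mem_idealStabilizer.2 fun f hf v hv => ?_
  -- Restricted to the line `t ↦ v + t c` in `V`, the polynomial `f` vanishes identically, and the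
  -- derivative of this restriction at `t = 0` is `(∂_c f)(v)`.
  let γ : σ → Polynomial K := fun i => .C (v i) + .C (c i) * .X
  have eval_aeval (t : K) (g : MvPolynomial σ K) :
      (aeval γ g).eval t = aeval (v + t • c) g := by
    rw [← Polynomial.coe_aeval_eq_eval, ← AlgHom.comp_apply, comp_aeval]
    congr 2
    ext i
    simp [γ, mul_comm t]
  have aeval_eq_zero : aeval γ f = 0 := by
    refine Polynomial.funext fun t => ?_
    rw [eval_aeval, Polynomial.eval_zero]
    exact hf _ (V.add_mem hv (V.smul_mem t hc))
  have aeval_constField : aeval γ (constField c f) = 0 := by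
    rw [← derivation_aeval_eq_aeval_constField Polynomial.derivative' (by simp [γ]),
      aeval_eq_zero, map_zero]
  simpa [aeval_constField] using (eval_aeval 0 (constField c f)).symm

lemma mem_of_eval_constField_eq_zero [Finite σ] {V : Submodule K (σ → K)} {c v : σ → K}
    (h : ∀ f ∈ vanishingIdeal K (V : Set (σ → K)), eval v (constField c f) = 0) : c ∈ V := by
  classical
  have := Fintype.ofFinite σ
  by_contra hc
  obtain ⟨φ, hφc, hVφ⟩ := Submodule.exists_le_ker_of_notMem hc
  obtain ⟨a, rfl⟩ := (dotProductEquiv K σ).surjective φ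
  have hf : ∑ i, C (a i) * X i ∈ vanishingIdeal K (V : Set (σ → K)) := fun w hw => by
    simpa [dotProduct] using hVφ hw
  exact hφc (by simpa [dotProduct] using h _ hf)

lemma mem_tangentSubalg_iff [Infinite K] [Finite σ] {V : Submodule K (σ → K)}
    {D : Derivation K (MvPolynomial σ K) (MvPolynomial σ K)} :
    D ∈ tangentSubalg V ↔ ∀ v ∈ V, valueAt D v ∈ V := by
  refine ⟨fun hD v hv => mem_of_eval_constField_eq_zero (v := v) fun f hf => ?_,
    fun hD f hf v hv => ?_⟩
  · rw [← eval_apply_eq_eval_constField_valueAt]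
    exact hD f hf v hv
  · rw [aeval_eq_eval, eval_apply_eq_eval_constField_valueAt]
    exact constField_mem_tangentSubalg (hD v hv) f hf v hv

end TangentSubalg

section Euler

variable {𝕜 n}

@[simp]
lemma euler_X (i : Fin n) : euler 𝕜 n (X i) = X i :=
  mkDerivation_X 𝕜 _ i

lemma valueAt_smul_euler (f : MvPolynomial (Fin n) 𝕜) (v : Fin n → 𝕜) :
    valueAt (f • euler 𝕜 n) v = eval v f • v := by
  ext i
  simp [valueAt]

lemma smul_euler_injective [Nonempty (Fin n)] :
    Function.Injective fun f : MvPolynomial (Fin n) 𝕜 => f • euler 𝕜 n := by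
  intro f g hfg
  obtain ⟨i⟩ := ‹Nonempty (Fin n)›
  have h : f * X i = g * X i := by
    simpa only [Derivation.smul_apply, euler_X, smul_eq_mul] using DFunLike.congr_fun hfg (X i)
  exact mul_right_cancel₀ (X_ne_zero i) h

lemma euler_apply_of_isHomogeneous {f : MvPolynomial (Fin n) 𝕜} {d : ℕ}
    (hf : f.IsHomogeneous d) : euler 𝕜 n f = (d : 𝕜) • f := by
  rw [derivation_apply_eq_sum_pderiv, Nat.cast_smul_eq_nsmul, ← hf.sum_X_mul_pderiv]
  simp only [euler_X, smul_eq_mul, mul_comm]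

lemma coeff_euler_apply (f : MvPolynomial (Fin n) 𝕜) (s : Fin n →₀ ℕ) :
    coeff s (euler 𝕜 n f) = s.degree * coeff s f := by
  induction f using MvPolynomial.induction_on' with
  | monomial u a =>
    rw [euler_apply_of_isHomogeneous (isHomogeneous_monomial a rfl), coeff_smul, coeff_monomial]
    split_ifs with hus
    · rw [hus, smul_eq_mul]
    · simp only [smul_zero, mul_zero]
  | add p q hp hq => simp only [map_add, coeff_add, hp, hq, mul_add]

lemma euler_apply_eq_smul_iff [CharZero 𝕜] {f : MvPolynomial (Fin n) 𝕜} {d : ℕ} :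
    euler 𝕜 n f = (d : 𝕜) • f ↔ f.IsHomogeneous d := by
  refine ⟨fun hf s hs => ?_, euler_apply_of_isHomogeneous⟩
  have hcoeff : (s.degree : 𝕜) * coeff s f = d * coeff s f := by
    rw [← coeff_euler_apply, hf, coeff_smul, smul_eq_mul]
  rw [Pi.one_def, ← Finsupp.degree_eq_weight_one]
  exact Nat.cast_injective (mul_right_cancel₀ hs hcoeff)

lemma mem_VectP_iff [CharZero 𝕜] {p : ℤ} {d : ℕ} (hpd : p + 1 = d) {D : Vect 𝕜 n} :
    D ∈ VectP 𝕜 n p ↔ ∀ i, (D (X i)).IsHomogeneous d := by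
  have hp : (p : 𝕜) + 1 = d := by exact_mod_cast congrArg (Int.cast : ℤ → 𝕜) hpd
  simp only [← euler_apply_eq_smul_iff, ← hp, add_smul, one_smul]
  simp only [VectP, Module.End.mem_eigenspace_iff, LieAlgebra.ad_apply, ← sub_eq_iff_eq_add]
  refine ⟨fun h i => ?_, fun h => derivation_ext fun i => ?_⟩
  · simpa only [Derivation.commutator_apply, euler_X, Derivation.smul_apply] using
      DFunLike.congr_fun h (X i)
  · simpa only [Derivation.commutator_apply, euler_X, Derivation.smul_apply] using h i

lemma VectP_neg_one [CharZero 𝕜] : VectP 𝕜 n (-1) = LinearMap.range constField := by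
  ext D
  rw [mem_VectP_iff (d := 0) (by simp), LinearMap.mem_range]
  constructor
  · exact fun hD => ⟨fun i => coeff 0 (D (X i)), derivation_ext fun i => by
      rw [constField_X, ← eq_C_coeff_zero_of_isHomogeneous_zero (hD i)]⟩
  · rintro ⟨c, rfl⟩ i
    rw [constField_X]
    exact isHomogeneous_C _ _

lemma IsGradedSubalg.le_tangentSubalg_constPart [CharZero 𝕜] {L : LieSubalgebra 𝕜 (Vect 𝕜 n)}
    (hL : IsGradedSubalg 𝕜 n L) : L ≤ tangentSubalg (constPart L) := by
  rw [← LieSubalgebra.toSubmodule_le_toSubmodule, hL]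
  refine iSup₂_le fun p hp D ⟨hDL, hDp⟩ => mem_tangentSubalg_iff.2 fun v hv => ?_
  have hpd : p + 1 = (p + 1).toNat := by lia
  exact valueAt_mem_constPart hDL ((mem_VectP_iff hpd).1 hDp) hv

lemma smul_euler_mem_tangentSubalg [Infinite 𝕜] (V : Submodule 𝕜 (Fin n → 𝕜))
    (f : MvPolynomial (Fin n) 𝕜) : f • euler 𝕜 n ∈ tangentSubalg V := by
  refine mem_tangentSubalg_iff.2 fun v hv => ?_
  rw [valueAt_smul_euler]
  exact V.smul_mem _ hv

lemma not_finiteDimensional_tangentSubalg [Infinite 𝕜] [Nonempty (Fin n)]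
    (V : Submodule 𝕜 (Fin n → 𝕜)) : ¬ FiniteDimensional 𝕜 (tangentSubalg V) := by
  intro (_ : Module.Finite 𝕜 (tangentSubalg V).toSubmodule)
  let smulEuler : MvPolynomial (Fin n) 𝕜 →ₗ[𝕜] (tangentSubalg V).toSubmodule :=
    ((LinearMap.toSpanSingleton _ _ (euler 𝕜 n)).restrictScalars 𝕜).codRestrict _
      (smul_euler_mem_tangentSubalg V)
  have smulEuler_injective : Function.Injective smulEuler := fun f g h =>
    smul_euler_injective (congrArg Subtype.val h)
  have : Module.Finite 𝕜 (MvPolynomial (Fin n) 𝕜) := .of_injective _ smulEuler_injective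
  have : Finite (Fin n →₀ ℕ) := Module.Finite.finite_basis (basisMonomials (Fin n) 𝕜)
  exact not_finite (Fin n →₀ ℕ)

theorem statement6_general [CharZero 𝕜] {L : LieSubalgebra 𝕜 (Vect 𝕜 n)}
    (hfd : FiniteDimensional 𝕜 L) (hgraded : IsGradedSubalg 𝕜 n L)
    (hmax : IsMaxSubalg 𝕜 n L) :
    VectP 𝕜 n (-1) ≤ L.toSubmodule := by
  rw [VectP_neg_one]
  rintro _ ⟨c, rfl⟩
  rcases isEmpty_or_nonempty (Fin n) with _ | _
  · rw [Subsingleton.elim c 0, map_zero]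
    exact L.zero_mem
  rcases hmax _ hgraded.le_tangentSubalg_constPart with heq | htop
  · exact absurd (by rwa [heq]) (not_finiteDimensional_tangentSubalg (constPart L))
  · have hc : constField c ∈ tangentSubalg (constPart L) := htop ▸ LieSubalgebra.mem_top _
    have hcV : valueAt (constField c) 0 ∈ constPart L := mem_tangentSubalg_iff.1 hc 0 (zero_mem _)
    rwa [valueAt_constField] at hcV

end Euler

/-- Let `L` be a finite-dimensional graded maximal subalgebra of `Vect_pol(E)`.  Then
`Vect₋₁(E) ⊆ L`, i.e. `L` contains all constant vector fields. -/
theorem statement6 (𝕜 : Type) [RCLike 𝕜] (n : ℕ) (hn : 0 < n)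
    (L : LieSubalgebra 𝕜 (Vect 𝕜 n)) (hfd : FiniteDimensional 𝕜 L)
    (hgraded : IsGradedSubalg 𝕜 n L) (hmax : IsMaxSubalg 𝕜 n L) :
    VectP 𝕜 n (-1) ≤ L.toSubmodule :=
  statement6_general hfd hgraded hmax
end

section
/- Let L be a finite-dimensional graded maximal subalgebra of Vect_pol(E). Then L_{−1} = Vect_{−1}(E) and the representation of L_0 = L ∩ Vect_0(E) on L_{−1} given by the adjoint action is irreducible. -/
/-!
A finite-dimensional maximal subalgebra `L` is contained in no proper subalgebra of infinite
dimension. Stabilizers of spaces of polynomials provide such subalgebras, in two ways.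

Suppose that `F = L₋₁`, regarded as a subspace of `E`, is not all of `E`. Let `I` be the space of
polynomials vanishing on `F`, which is the largest `F`-stable space of polynomials vanishing at
`0`. Since `D (X g) = X (D g) + ⁅D, X⁆ g` for `D ∈ F` and `X ∈ L`, the space `L · I` is `F`-stable
too, and its elements vanish at `0` because vector fields of degree `≥ 0` do; so `L` stabilizes
`I`. A nonzero linear form `ℓ` killed by `F` lies in `I`. The stabilizer of `I` contains all
fields `(g ℓ) D`, but not a constant field `D` with `D ℓ = 1`.

Suppose now that `L₋₁ = E` and that `F` is a proper nonzero `L₀`-stable subspace of `E`. Let `A` be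
the algebra of polynomials killed by `F`. For `D ∈ F` the space `D (L · A)` is stable under all
partial derivatives and vanishes at `0`, because `D (X g) = ⁅D, X⁆ g` for `g ∈ A` and
`⁅D, L₀⁆ ⊆ F`; hence it is zero by Taylor's formula, and `L` stabilizes `A`. The stabilizer of `A`
contains all fields `g D` with `D ∈ F`, but it is proper.
-/

open MvPolynomial

variable (𝕜 : Type*) [Field 𝕜] (n : ℕ)

/-- A graded subalgebra `L` is irreducible if the representation of `L₀ = L ∩ Vect_0(E)` on
`L₋₁ = L ∩ Vect_{-1}(E)` given by the adjoint action is irreducible. -/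
def IsIrreducibleRep (L : LieSubalgebra 𝕜 (Vect 𝕜 n)) : Prop :=
  L.toSubmodule ⊓ VectP 𝕜 n (-1) ≠ ⊥ ∧
    ∀ F : Submodule 𝕜 (Vect 𝕜 n), F ≤ L.toSubmodule ⊓ VectP 𝕜 n (-1) →
      (∀ x ∈ L.toSubmodule ⊓ VectP 𝕜 n 0, ∀ y ∈ F, ⁅x, y⁆ ∈ F) →
      F = ⊥ ∨ F = L.toSubmodule ⊓ VectP 𝕜 n (-1)

/-! ### Subspaces of a Lie module -/

section LieModule

lemma lie_mem_eigenspace_ad {R 𝔤 : Type*} [CommRing R] [LieRing 𝔤] [LieAlgebra R 𝔤] {x y z : 𝔤}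
    {a b : R} (hy : y ∈ Module.End.eigenspace (LieAlgebra.ad R 𝔤 x) a)
    (hz : z ∈ Module.End.eigenspace (LieAlgebra.ad R 𝔤 x) b) :
    ⁅y, z⁆ ∈ Module.End.eigenspace (LieAlgebra.ad R 𝔤 x) (a + b) := by
  rw [Module.End.mem_eigenspace_iff, LieAlgebra.ad_apply] at *
  rw [leibniz_lie, hy, hz, smul_lie, lie_smul, add_smul]

variable {R 𝔤 M : Type*} [CommRing R] [LieRing 𝔤] [LieAlgebra R 𝔤] [AddCommGroup M] [Module R M]
  [LieRingModule 𝔤 M] [LieModule R 𝔤 M]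

/-- The subalgebra of the elements of `𝔤` that map the subspace `W` of a Lie module to itself. -/
def lieStabilizer (W : Submodule R M) : LieSubalgebra R 𝔤 where
  carrier := {x | ∀ w ∈ W, ⁅x, w⁆ ∈ W}
  add_mem' hx hy w hw := by
    rw [add_lie]
    exact W.add_mem (hx w hw) (hy w hw)
  zero_mem' w _ := by
    rw [zero_lie]
    exact W.zero_mem
  smul_mem' c x hx w hw := by
    rw [smul_lie]
    exact W.smul_mem c (hx w hw)
  lie_mem' {x y} hx hy w hw := by
    rw [lie_lie]
    exact W.sub_mem (hx _ (hy w hw)) (hy _ (hx w hw))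

variable (R 𝔤) in
/-- The map `x ↦ ⁅x, m⁆`, which lets linearity in `x` be used for a fixed `m`. -/
def lieEvalAt (m : M) : 𝔤 →ₗ[R] M :=
  (LieModule.toEnd R 𝔤 M : 𝔤 →ₗ[R] Module.End R M).flip m

/-- The span of the elements `⁅x, w⁆` with `x ∈ S` and `w ∈ W`. Unlike in Mathlib's bracket of a
Lie ideal and a Lie submodule, `S` and `W` are arbitrary subspaces. -/
def bracketSpan (S : Submodule R 𝔤) (W : Submodule R M) : Submodule R M :=
  Submodule.map₂ (LieModule.toEnd R 𝔤 M : 𝔤 →ₗ[R] Module.End R M) S W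

lemma lie_mem_bracketSpan {S : Submodule R 𝔤} {W : Submodule R M} {x : 𝔤} (hx : x ∈ S) {w : M}
    (hw : w ∈ W) : ⁅x, w⁆ ∈ bracketSpan S W :=
  Submodule.apply_mem_map₂ _ hx hw

lemma bracketSpan_le {S : Submodule R 𝔤} {W P : Submodule R M} :
    bracketSpan S W ≤ P ↔ ∀ x ∈ S, ∀ w ∈ W, ⁅x, w⁆ ∈ P :=
  Submodule.map₂_le

lemma mem_lieStabilizer_bracketSpan {S : Submodule R 𝔤} {W : Submodule R M} {y : 𝔤}
    (hS : ∀ x ∈ S, ⁅y, x⁆ ∈ S) (hW : y ∈ lieStabilizer W) :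
    y ∈ lieStabilizer (bracketSpan S W) := by
  suffices bracketSpan S W ≤ (bracketSpan S W).comap (LieModule.toEnd R 𝔤 M y) from
    fun w hw => this hw
  refine bracketSpan_le.2 fun x hx w hw => ?_
  rw [Submodule.mem_comap, LieModule.toEnd_apply_apply, leibniz_lie]
  exact Submodule.add_mem _ (lie_mem_bracketSpan (hS x hx) hw) (lie_mem_bracketSpan hx (hW w hw))

/-- The largest subspace of `W` that is stable under all elements of `S`. When `S` consists of the
constant vector fields with values in a subspace `F` of `E` and `W` of the polynomials vanishing at
the origin, these are the polynomials vanishing on `F`. -/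
def stableCore (S : Submodule R 𝔤) (W : Submodule R M) : Submodule R M :=
  sSup {P | P ≤ W ∧ S ≤ (lieStabilizer P).toSubmodule}

lemma le_stableCore {S : Submodule R 𝔤} {W P : Submodule R M} (hPW : P ≤ W)
    (hSP : S ≤ (lieStabilizer P).toSubmodule) : P ≤ stableCore S W :=
  le_sSup ⟨hPW, hSP⟩

lemma stableCore_le (S : Submodule R 𝔤) (W : Submodule R M) : stableCore S W ≤ W :=
  sSup_le fun _ hP => hP.1

lemma mem_lieStabilizer_stableCore {S : Submodule R 𝔤} {W : Submodule R M} {x : 𝔤} (hx : x ∈ S) :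
    x ∈ lieStabilizer (stableCore S W) := by
  suffices stableCore S W ≤ (stableCore S W).comap (LieModule.toEnd R 𝔤 M x) from
    fun w hw => this hw
  exact sSup_le fun P hP w hw => le_stableCore hP.1 hP.2 (hP.2 hx w hw)

lemma subalgebra_le_lieStabilizer_stableCore {L : LieSubalgebra R 𝔤} {S : Submodule R 𝔤}
    {W : Submodule R M} (hSL : S ≤ L.toSubmodule)
    (h : ∀ x ∈ L, ∀ w ∈ stableCore S W, ⁅x, w⁆ ∈ W) : L ≤ lieStabilizer (stableCore S W) := by
  have hspan : bracketSpan L.toSubmodule (stableCore S W) ≤ stableCore S W :=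
    le_stableCore (bracketSpan_le.2 h) fun y hy => mem_lieStabilizer_bracketSpan
      (fun x hx => L.lie_mem (hSL hy) hx) (mem_lieStabilizer_stableCore hy)
  exact fun x hx w hw => hspan (lie_mem_bracketSpan hx hw)

/-- The elements of a Lie module that are annihilated by every element of `S`, i.e. the invariants
of `S`. -/
def lieAnnihilated (S : Submodule R 𝔤) : Submodule R M :=
  ⨅ x ∈ S, LinearMap.ker (LieModule.toEnd R 𝔤 M x)

lemma mem_lieAnnihilated {S : Submodule R 𝔤} {m : M} :
    m ∈ lieAnnihilated S ↔ ∀ x ∈ S, ⁅x, m⁆ = 0 := by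
  simp only [lieAnnihilated, Submodule.mem_iInf, LinearMap.mem_ker, LieModule.toEnd_apply_apply]

lemma mem_lieStabilizer_lieAnnihilated {S : Submodule R 𝔤} {y : 𝔤} (h : ∀ x ∈ S, ⁅x, y⁆ = 0) :
    y ∈ lieStabilizer (lieAnnihilated S : Submodule R M) := by
  intro m hm
  refine mem_lieAnnihilated.2 fun x hx => ?_
  rw [leibniz_lie, h x hx, zero_lie, mem_lieAnnihilated.1 hm x hx, lie_zero, add_zero]

end LieModule

/-! ### Derivations and polynomials -/

lemma finite_of_forall_smul_mem {K A M : Type*} [Field K] [CommRing A] [IsDomain A] [Algebra K A]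
    [AddCommGroup M] [Module A M] [Module.IsTorsionFree A M] [Module K M] [IsScalarTower K A M]
    {S : Submodule K M} [FiniteDimensional K S] {x : M} (hx : x ≠ 0) (h : ∀ a : A, a • x ∈ S) :
    FiniteDimensional K A :=
  Module.Finite.of_injective
    (((LinearMap.toSpanSingleton A M x).restrictScalars K).codRestrict S h)
    fun _ _ hab => smul_left_injective A hx (congrArg Subtype.val hab)

section Derivation

variable {R A M : Type*} [CommSemiring R] [CommSemiring A] [Algebra R A] [AddCommMonoid M]
  [Module A M] [Module R M]

instance derivation_isTorsionFree [SMulCommClass R A M] [Module.IsTorsionFree A M] :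
    Module.IsTorsionFree A (Derivation R A M) :=
  Derivation.coe_injective.moduleIsTorsionFree _ Derivation.coe_smul

lemma derivation_sum_apply {ι : Type*} (s : Finset ι) (D : ι → Derivation R A M) (a : A) :
    (∑ i ∈ s, D i) a = ∑ i ∈ s, D i a := by
  simp only [← Derivation.coeFnAddMonoidHom_apply, map_sum, Finset.sum_apply]

end Derivation

lemma mul_mem_stableCore {R A : Type*} [CommRing R] [CommRing A] [Algebra R A]
    {S : Submodule R (Derivation R A A)} {I : Ideal A} {a : A} (haI : a ∈ I)
    (haS : a ∈ lieAnnihilated S) (b : A) : a * b ∈ stableCore S (I.restrictScalars R) := by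
  refine le_stableCore (P := (Ideal.span {a}).restrictScalars R)
    ((Ideal.span_singleton_le_iff_mem I).2 haI) ?_
    (Ideal.mul_mem_right b _ (Ideal.mem_span_singleton_self a))
  intro D hD c hc
  obtain ⟨d, rfl⟩ := Ideal.mem_span_singleton.1 hc
  have hDa : D a = 0 := mem_lieAnnihilated.1 haS D hD
  have hDad : D (a * d) = a * D d := by
    rw [D.leibniz, hDa, smul_zero, add_zero, smul_eq_mul]
  exact Ideal.mem_span_singleton.2 ⟨D d, hDad⟩

section MvPolynomial

variable {R σ : Type*} [CommRing R]

lemma not_finite_mvPolynomial [Nontrivial R] [Nonempty σ] :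
    ¬ Module.Finite R (MvPolynomial σ R) := fun _ =>
  have := Module.Finite.finite_basis (basisMonomials σ R)
  not_finite (σ →₀ ℕ)

/-- The polynomials vanishing at the origin, as an `R`-submodule because this is how vector fields
act on polynomials. -/
noncomputable def vanishingAtOrigin (R σ : Type*) [CommRing R] : Submodule R (MvPolynomial σ R) :=
  (RingHom.ker constantCoeff).restrictScalars R

lemma mem_vanishingAtOrigin {p : MvPolynomial σ R} :
    p ∈ vanishingAtOrigin R σ ↔ constantCoeff p = 0 := Iff.rfl

lemma exists_apply_X_ne_zero {A : Type*} [AddCommGroup A] [Module (MvPolynomial σ R) A]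
    [Module R A] {D : Derivation R (MvPolynomial σ R) A} (hD : D ≠ 0) : ∃ i, D (X i) ≠ 0 := by
  contrapose! hD
  exact derivation_ext hD

lemma pderiv_ne_zero [Nontrivial R] (i : σ) :
    (pderiv i : Derivation R (MvPolynomial σ R) (MvPolynomial σ R)) ≠ 0 := fun h => by
  simpa using DFunLike.congr_fun h (X i)

lemma apply_mem_vanishingAtOrigin {D : Derivation R (MvPolynomial σ R) (MvPolynomial σ R)}
    (hD : ∀ i, D (X i) ∈ vanishingAtOrigin R σ) (p : MvPolynomial σ R) :
    D p ∈ vanishingAtOrigin R σ := by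
  simp only [mem_vanishingAtOrigin] at hD ⊢
  induction p using MvPolynomial.induction_on with
  | C a => rw [derivation_C, map_zero]
  | add p q hp hq => rw [map_add, map_add, hp, hq, add_zero]
  | mul_X p i hp => simp [hD i, hp]

/-- Taylor's formula: a polynomial whose iterated derivatives all vanish at the origin is zero. -/
lemma eq_bot_of_pderiv_mem [NoZeroDivisors R] [CharZero R] {P : Submodule R (MvPolynomial σ R)}
    (h0 : P ≤ vanishingAtOrigin R σ) (hP : ∀ i, ∀ p ∈ P, pderiv i p ∈ P) : P = ⊥ := by
  suffices ∀ (d : ℕ) (m : σ →₀ ℕ), m.degree = d → ∀ p ∈ P, coeff m p = 0 from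
    P.eq_bot_iff.2 fun p hp => MvPolynomial.ext _ _ fun m => this _ m rfl p hp
  intro d
  induction d with
  | zero =>
    intro m hm p hp
    rw [(Finsupp.degree_eq_zero_iff m).1 hm]
    exact h0 hp
  | succ d ih =>
    intro m hm p hp
    obtain ⟨i, hi⟩ : ∃ i, m i ≠ 0 := Finsupp.ne_iff.1 (show m ≠ 0 by rintro rfl; simp at hm)
    obtain ⟨k, rfl⟩ := exists_add_of_le (Finsupp.single_le_iff.2 (Nat.one_le_iff_ne_zero.2 hi))
    have hk : k.degree = d := by
      rw [map_add, Finsupp.degree_single] at hm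
      omega
    have hcoeff := ih k hk _ (hP i p hp)
    rw [coeff_pderiv, add_comm k] at hcoeff
    exact (mul_eq_zero.1 hcoeff).resolve_right (Nat.cast_add_one_ne_zero _)

end MvPolynomial

/-! ### The grading of `Vect_pol(E)` -/

section Grading

variable {𝕜 n}

lemma mem_VectP {p : ℤ} {D : Vect 𝕜 n} : D ∈ VectP 𝕜 n p ↔ ⁅euler 𝕜 n, D⁆ = (p : 𝕜) • D := by
  rw [VectP, Module.End.mem_eigenspace_iff, LieAlgebra.ad_apply]

lemma lie_mem_VectP {p q : ℤ} {D D' : Vect 𝕜 n} (hD : D ∈ VectP 𝕜 n p) (hD' : D' ∈ VectP 𝕜 n q) :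
    ⁅D, D'⁆ ∈ VectP 𝕜 n (p + q) := by
  rw [VectP, Int.cast_add]
  exact lie_mem_eigenspace_ad hD hD'

lemma euler_eq_sum : euler 𝕜 n = ∑ i, (X i : MvPolynomial (Fin n) 𝕜) • pderiv i := by
  classical
  refine derivation_ext fun j => ?_
  simp [euler, derivation_sum_apply, pderiv_X, Pi.single_apply]

lemma euler_monomial (m : Fin n →₀ ℕ) (a : 𝕜) :
    euler 𝕜 n (monomial m a) = m.degree • monomial m a := by
  simp only [euler_eq_sum, derivation_sum_apply, Derivation.smul_apply, smul_eq_mul,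
    X_mul_pderiv_monomial, ← Finset.sum_smul, Finsupp.degree_eq_sum]

lemma coeff_euler (p : MvPolynomial (Fin n) 𝕜) (m : Fin n →₀ ℕ) :
    coeff m (euler 𝕜 n p) = m.degree * coeff m p := by
  classical
  induction p using MvPolynomial.induction_on' with
  | monomial k a =>
    rw [euler_monomial, coeff_smul, coeff_monomial, nsmul_eq_mul]
    split_ifs with h
    · rw [h]
    · rw [mul_zero, mul_zero]
  | add p q hp hq => rw [map_add, coeff_add, coeff_add, hp, hq, mul_add]

lemma coeff_apply_X_eq_zero [CharZero 𝕜] {p : ℤ} {D : Vect 𝕜 n} (hD : D ∈ VectP 𝕜 n p) (i : Fin n)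
    {m : Fin n →₀ ℕ} (hm : (m.degree : ℤ) ≠ p + 1) : coeff m (D (X i)) = 0 := by
  have heuler : euler 𝕜 n (D (X i)) - D (X i) = (p : 𝕜) • D (X i) := by
    simpa [euler, Derivation.commutator_apply] using DFunLike.congr_fun (mem_VectP.1 hD) (X i)
  have hcoeff := congrArg (coeff m) heuler
  rw [coeff_sub, coeff_euler, coeff_smul, smul_eq_mul] at hcoeff
  have hne : (m.degree : 𝕜) - (p + 1) ≠ 0 := sub_ne_zero.2 (by exact_mod_cast hm)
  refine (mul_eq_zero.1 (?_ : ((m.degree : 𝕜) - (p + 1)) * _ = 0)).resolve_left hne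
  linear_combination hcoeff

lemma VectP_eq_bot_of_lt [CharZero 𝕜] {p : ℤ} (hp : p < -1) : VectP 𝕜 n p = ⊥ := by
  refine (Submodule.eq_bot_iff _).2 fun D hD => derivation_ext fun i => ?_
  ext m
  exact coeff_apply_X_eq_zero hD i (by omega)

lemma lie_eq_zero_of_mem_VectP_neg_one [CharZero 𝕜] {D D' : Vect 𝕜 n} (hD : D ∈ VectP 𝕜 n (-1))
    (hD' : D' ∈ VectP 𝕜 n (-1)) : ⁅D, D'⁆ = 0 := by
  have h := lie_mem_VectP hD hD'
  rwa [VectP_eq_bot_of_lt (by norm_num), Submodule.mem_bot] at h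

lemma apply_mem_vanishingAtOrigin_of_mem_VectP [CharZero 𝕜] {p : ℤ} (hp : 0 ≤ p) {D : Vect 𝕜 n}
    (hD : D ∈ VectP 𝕜 n p) (g : MvPolynomial (Fin n) 𝕜) : D g ∈ vanishingAtOrigin 𝕜 (Fin n) :=
  apply_mem_vanishingAtOrigin
    (fun i => coeff_apply_X_eq_zero hD i (by rw [map_zero]; omega)) g

lemma pderiv_mem_VectP (i : Fin n) : (pderiv i : Vect 𝕜 n) ∈ VectP 𝕜 n (-1) := by
  classical
  refine mem_VectP.2 (derivation_ext fun j => ?_)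
  obtain rfl | hij := eq_or_ne j i <;> simp [euler, Derivation.commutator_apply, *]

lemma apply_X_eq_C_of_mem_VectP_neg_one [CharZero 𝕜] {D : Vect 𝕜 n} (hD : D ∈ VectP 𝕜 n (-1))
    (i : Fin n) : D (X i) = C (constantCoeff (D (X i))) := by
  classical
  ext m
  rw [coeff_C]
  split_ifs with hm
  · rw [← hm, constantCoeff_eq]
  · refine coeff_apply_X_eq_zero hD i fun h => hm ((Finsupp.degree_eq_zero_iff m).1 ?_).symm
    simpa using h

lemma eq_sum_smul_pderiv_of_mem_VectP_neg_one [CharZero 𝕜] {D : Vect 𝕜 n}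
    (hD : D ∈ VectP 𝕜 n (-1)) : D = ∑ i, constantCoeff (D (X i)) • (pderiv i : Vect 𝕜 n) := by
  classical
  refine derivation_ext fun j => ?_
  rw [apply_X_eq_C_of_mem_VectP_neg_one hD]
  simp [derivation_sum_apply, pderiv_X, Pi.single_apply, smul_eq_C_mul]

lemma apply_sum_dual_smul_X [CharZero 𝕜] (f : Module.Dual 𝕜 (Vect 𝕜 n)) {D : Vect 𝕜 n}
    (hD : D ∈ VectP 𝕜 n (-1)) : D (∑ i, f (pderiv i) • X i) = C (f D) := by
  have hfD : f D = ∑ i, constantCoeff (D (X i)) * f (pderiv i) := by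
    conv_lhs => rw [eq_sum_smul_pderiv_of_mem_VectP_neg_one hD]
    simp only [map_sum, map_smul, smul_eq_mul]
  rw [hfD, map_sum, map_sum]
  refine Finset.sum_congr rfl fun i _ => ?_
  rw [Derivation.map_smul, apply_X_eq_C_of_mem_VectP_neg_one hD, smul_eq_C_mul, ← C_mul, mul_comm,
    constantCoeff_C]

lemma exists_linear_form_of_lt [CharZero 𝕜] {F : Submodule 𝕜 (Vect 𝕜 n)}
    (hF : F < VectP 𝕜 n (-1)) :
    ∃ l ∈ vanishingAtOrigin 𝕜 (Fin n), l ∈ lieAnnihilated F ∧ ∃ D : Vect 𝕜 n, D l = 1 := by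
  obtain ⟨D, hD, hDF⟩ := SetLike.exists_of_lt hF
  obtain ⟨f, hfD, hfF⟩ := F.exists_dual_map_eq_bot_of_notMem hDF inferInstance
  refine ⟨∑ i, f (pderiv i) • X i, ?_, mem_lieAnnihilated.2 fun D' hD' => ?_, (f D)⁻¹ • D, ?_⟩
  · simp [mem_vanishingAtOrigin, smul_eq_C_mul]
  · have hfD' : f D' = 0 := f.le_ker_iff_map.2 hfF hD'
    rw [Derivation.bracket_eq_fun, apply_sum_dual_smul_X f (hF.le hD'), hfD', C_0]
  · rw [Derivation.smul_apply, apply_sum_dual_smul_X f hD, smul_eq_C_mul, ← C_mul,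
      inv_mul_cancel₀ hfD, C_1]

lemma IsGradedSubalg.map_mem_of_forall {L : LieSubalgebra 𝕜 (Vect 𝕜 n)}
    (hL : IsGradedSubalg 𝕜 n L) {M : Type*} [AddCommGroup M] [Module 𝕜 M] (φ : Vect 𝕜 n →ₗ[𝕜] M)
    {W : Submodule 𝕜 M} (h : ∀ p ≥ (-1 : ℤ), ∀ D ∈ L.toSubmodule ⊓ VectP 𝕜 n p, φ D ∈ W)
    {Y : Vect 𝕜 n} (hY : Y ∈ L) : φ Y ∈ W :=
  (hL.trans_le (iSup₂_le h) : L.toSubmodule ≤ W.comap φ) hY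

end Grading

/-! ### Maximal subalgebras -/

section MaximalSubalgebra

variable {𝕜 n} {L : LieSubalgebra 𝕜 (Vect 𝕜 n)}

lemma IsMaxSubalg.eq_top_of_forall_smul_mem (hmax : IsMaxSubalg 𝕜 n L)
    (hfd : FiniteDimensional 𝕜 L) {L' : LieSubalgebra 𝕜 (Vect 𝕜 n)} (hle : L ≤ L') {D : Vect 𝕜 n}
    (hD : D ≠ 0) (h : ∀ g : MvPolynomial (Fin n) 𝕜, g • D ∈ L') : L' = ⊤ := by
  refine (hmax L' hle).resolve_left ?_
  rintro rfl
  obtain ⟨i, -⟩ := exists_apply_X_ne_zero hD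
  have : Nonempty (Fin n) := ⟨i⟩
  exact not_finite_mvPolynomial (finite_of_forall_smul_mem (S := L'.toSubmodule) hD h)

variable [CharZero 𝕜]

lemma IsGradedSubalg.apply_mem_vanishingAtOrigin (hL : IsGradedSubalg 𝕜 n L)
    {g : MvPolynomial (Fin n) 𝕜}
    (hg : ∀ D ∈ L.toSubmodule ⊓ VectP 𝕜 n (-1), D g ∈ vanishingAtOrigin 𝕜 (Fin n))
    {Y : Vect 𝕜 n} (hY : Y ∈ L) : Y g ∈ vanishingAtOrigin 𝕜 (Fin n) := by
  refine hL.map_mem_of_forall (lieEvalAt 𝕜 (Vect 𝕜 n) g) (fun p hp Z hZ => ?_) hY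
  obtain rfl | hp := hp.eq_or_lt
  · exact hg Z hZ
  · exact apply_mem_vanishingAtOrigin_of_mem_VectP (by omega) hZ.2 g

lemma IsGradedSubalg.le_lieStabilizer_stableCore (hL : IsGradedSubalg 𝕜 n L) :
    L ≤ lieStabilizer
      (stableCore (L.toSubmodule ⊓ VectP 𝕜 n (-1)) (vanishingAtOrigin 𝕜 (Fin n))) :=
  subalgebra_le_lieStabilizer_stableCore inf_le_left fun _ hY _ hg =>
    hL.apply_mem_vanishingAtOrigin
      (fun _ hD => stableCore_le _ _ (mem_lieStabilizer_stableCore hD _ hg)) hY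

theorem VectP_neg_one_le_of_isMaxSubalg (hfd : FiniteDimensional 𝕜 L) (hL : IsGradedSubalg 𝕜 n L)
    (hmax : IsMaxSubalg 𝕜 n L) : VectP 𝕜 n (-1) ≤ L.toSubmodule := by
  by_contra hne
  obtain ⟨l, hl0, hlF, D, hDl⟩ := exists_linear_form_of_lt (inf_lt_right.2 hne)
  have hlI : ∀ h, l * h ∈
      stableCore (L.toSubmodule ⊓ VectP 𝕜 n (-1)) (vanishingAtOrigin 𝕜 (Fin n)) :=
    mul_mem_stableCore hl0 hlF
  have hlD : l • D ≠ 0 := smul_ne_zero (by rintro rfl; simp at hDl) (by rintro rfl; simp at hDl)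
  have htop := hmax.eq_top_of_forall_smul_mem hfd hL.le_lieStabilizer_stableCore hlD
    fun g h _ => by
      rw [smul_comm]
      exact hlI ((g • D) h)
  have hD1 : D l ∈ vanishingAtOrigin 𝕜 (Fin n) := stableCore_le _ _
    ((htop.ge (LieSubalgebra.mem_top D) : D ∈ lieStabilizer _) l (by simpa using hlI 1))
  simp [hDl, mem_vanishingAtOrigin] at hD1

variable {F : Submodule 𝕜 (Vect 𝕜 n)}

lemma IsGradedSubalg.lie_apply_mem_vanishingAtOrigin (hL : IsGradedSubalg 𝕜 n L)
    (hF : F ≤ VectP 𝕜 n (-1)) (hstab : ∀ x ∈ L.toSubmodule ⊓ VectP 𝕜 n 0, ∀ y ∈ F, ⁅x, y⁆ ∈ F)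
    {D : Vect 𝕜 n} (hD : D ∈ F) {Y : Vect 𝕜 n} (hY : Y ∈ L) {g : MvPolynomial (Fin n) 𝕜}
    (hg : g ∈ lieAnnihilated F) : ⁅D, Y⁆ g ∈ vanishingAtOrigin 𝕜 (Fin n) := by
  refine hL.map_mem_of_forall (lieEvalAt 𝕜 (Vect 𝕜 n) g ∘ₗ LieAlgebra.ad 𝕜 (Vect 𝕜 n) D)
    (fun p hp Z hZ => ?_) hY
  change ⁅D, Z⁆ g ∈ vanishingAtOrigin 𝕜 (Fin n)
  obtain hp | rfl | hp := lt_trichotomy p 0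
  · obtain rfl : p = -1 := by omega
    rw [lie_eq_zero_of_mem_VectP_neg_one (hF hD) hZ.2, Derivation.zero_apply]
    exact Submodule.zero_mem _
  · have hZD : ⁅Z, D⁆ g = 0 := mem_lieAnnihilated.1 hg _ (hstab Z hZ D hD)
    rw [← lie_skew, Derivation.neg_apply, hZD, neg_zero]
    exact Submodule.zero_mem _
  · exact apply_mem_vanishingAtOrigin_of_mem_VectP (by omega) (lie_mem_VectP (hF hD) hZ.2) g

lemma IsGradedSubalg.le_lieStabilizer_lieAnnihilated (hL : IsGradedSubalg 𝕜 n L)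
    (hconst : VectP 𝕜 n (-1) ≤ L.toSubmodule) (hF : F ≤ VectP 𝕜 n (-1))
    (hstab : ∀ x ∈ L.toSubmodule ⊓ VectP 𝕜 n 0, ∀ y ∈ F, ⁅x, y⁆ ∈ F) :
    L ≤ lieStabilizer (lieAnnihilated F : Submodule 𝕜 (MvPolynomial (Fin n) 𝕜)) := by
  intro Y hY g hg
  refine mem_lieAnnihilated.2 fun D hD => ?_
  let P := bracketSpan L.toSubmodule (lieAnnihilated F : Submodule 𝕜 (MvPolynomial (Fin n) 𝕜))
  suffices P.map (D : MvPolynomial (Fin n) 𝕜 →ₗ[𝕜] MvPolynomial (Fin n) 𝕜) = ⊥ from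
    LinearMap.le_ker_iff_map.2 this (lie_mem_bracketSpan hY hg)
  refine eq_bot_of_pderiv_mem ?_ ?_
  · refine Submodule.map_le_iff_le_comap.2 (bracketSpan_le.2 fun Z hZ h hh => ?_)
    have hDZ : ⁅D, Z⁆ h = D (Z h) := by
      have hDh : D h = 0 := mem_lieAnnihilated.1 hh D hD
      rw [Derivation.commutator_apply, hDh, map_zero, sub_zero]
    change D (Z h) ∈ vanishingAtOrigin 𝕜 (Fin n)
    rw [← hDZ]
    exact hL.lie_apply_mem_vanishingAtOrigin hF hstab hD hZ hh
  · rintro i _ ⟨q, hq, rfl⟩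
    have hcomm : ∀ D' ∈ F, ⁅D', (pderiv i : Vect 𝕜 n)⁆ = 0 := fun D' hD' =>
      lie_eq_zero_of_mem_VectP_neg_one (hF hD') (pderiv_mem_VectP i)
    have hiP : pderiv i q ∈ P := mem_lieStabilizer_bracketSpan
      (fun Z hZ => L.lie_mem (hconst (pderiv_mem_VectP i)) hZ)
      (mem_lieStabilizer_lieAnnihilated hcomm) q hq
    have hDi : D (pderiv i q) = pderiv i (D q) := by
      rw [← sub_eq_zero, ← Derivation.commutator_apply, hcomm D hD, Derivation.zero_apply]
    exact ⟨pderiv i q, hiP, hDi⟩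

theorem eq_bot_or_eq_of_isMaxSubalg (hfd : FiniteDimensional 𝕜 L) (hL : IsGradedSubalg 𝕜 n L)
    (hmax : IsMaxSubalg 𝕜 n L) (hF : F ≤ VectP 𝕜 n (-1))
    (hstab : ∀ x ∈ L.toSubmodule ⊓ VectP 𝕜 n 0, ∀ y ∈ F, ⁅x, y⁆ ∈ F) :
    F = ⊥ ∨ F = VectP 𝕜 n (-1) := by
  by_contra! ⟨hbot, hne⟩
  obtain ⟨l, -, hlF, T, hTl⟩ := exists_linear_form_of_lt (hF.lt_of_ne hne)
  obtain ⟨D, hDF, hD⟩ := Submodule.exists_mem_ne_zero_of_ne_bot hbot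
  obtain ⟨i, hi⟩ := exists_apply_X_ne_zero hD
  have hconst := VectP_neg_one_le_of_isMaxSubalg hfd hL hmax
  have htop := hmax.eq_top_of_forall_smul_mem hfd
    (hL.le_lieStabilizer_lieAnnihilated hconst hF hstab) hD fun g h hh => by
      have hDh : D h = 0 := mem_lieAnnihilated.1 hh D hDF
      rw [Derivation.bracket_eq_fun, Derivation.smul_apply, hDh, smul_zero]
      exact Submodule.zero_mem _
  -- `x_i T` maps the invariant `l` to `x_i`, which is not constant along `D`.
  have hXT : (X i : MvPolynomial (Fin n) 𝕜) • T ∈ lieStabilizer (lieAnnihilated F) :=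
    htop.ge (LieSubalgebra.mem_top _)
  have hTl_inv := mem_lieAnnihilated.1 (hXT l hlF) D hDF
  rw [Derivation.bracket_eq_fun, Derivation.bracket_eq_fun, Derivation.smul_apply, hTl, smul_eq_mul,
    mul_one] at hTl_inv
  exact hi hTl_inv

end MaximalSubalgebra

theorem statement8_general {𝕜 : Type*} [Field 𝕜] [CharZero 𝕜] {n : ℕ} (hn : 0 < n)
    {L : LieSubalgebra 𝕜 (Vect 𝕜 n)} (hfd : FiniteDimensional 𝕜 L)
    (hgraded : IsGradedSubalg 𝕜 n L) (hmax : IsMaxSubalg 𝕜 n L) :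
    L.toSubmodule ⊓ VectP 𝕜 n (-1) = VectP 𝕜 n (-1) ∧ IsIrreducibleRep 𝕜 n L := by
  have hinf : L.toSubmodule ⊓ VectP 𝕜 n (-1) = VectP 𝕜 n (-1) :=
    inf_eq_right.2 (VectP_neg_one_le_of_isMaxSubalg hfd hgraded hmax)
  refine ⟨hinf, ?_, fun F hF hstab => ?_⟩
  · rw [hinf, Submodule.ne_bot_iff]
    exact ⟨pderiv ⟨0, hn⟩, pderiv_mem_VectP _, pderiv_ne_zero _⟩
  · rw [hinf] at hF ⊢
    exact eq_bot_or_eq_of_isMaxSubalg hfd hgraded hmax hF hstab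

/-- Let `L` be a finite-dimensional graded maximal subalgebra of `Vect_pol(E)`.  Then
`L₋₁ = Vect₋₁(E)` and the representation of `L₀ = L ∩ Vect₀(E)` on `L₋₁` by the adjoint
action is irreducible. -/
theorem statement8 (𝕜 : Type) [RCLike 𝕜] (n : ℕ) (hn : 0 < n)
    (L : LieSubalgebra 𝕜 (Vect 𝕜 n)) (hfd : FiniteDimensional 𝕜 L)
    (hgraded : IsGradedSubalg 𝕜 n L) (hmax : IsMaxSubalg 𝕜 n L) :
    L.toSubmodule ⊓ VectP 𝕜 n (-1) = VectP 𝕜 n (-1) ∧ IsIrreducibleRep 𝕜 n L :=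
  statement8_general hn hfd hgraded hmax
end
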